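/- Let T > 0, let Ω_T = (0,1) × (0,T) and Ω̃_T = (−1,2) × (−T,2T), let u be continuous on [0,1] × [0,T] with finite parabolic BMO norm on Ω_T, and let ũ be the reflection extension of u, extended by 0 outside Ω̃_T. Let Ψ ∈ C_c^∞(ℝ²) with 0 ≤ Ψ ≤ 1, Ψ = 1 on Z₁ = (−1/4, 5/4) × (−T/4, 5T/4), and Ψ = 0 on ℝ² ∖ Z₂ where Z₂ = (−3/4, 7/4) × (−3T/4, 7T/4). Then there exists a constant C > 0 depending only on T and Ψ such that ‖Ψũ‖_{BMOₚ(ℝ²)} ≤ C (‖u‖_{BMOₚ(Ω_T)} + ‖u‖_{L¹(Ω_T)}). -/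

import Mathlib

open MeasureTheory Real
open scoped ENNReal

noncomputable section

/-- The parabolic distance `‖z‖ₚ = max |x| √|t|` from `z = (x,t) ∈ ℝ²` to the origin. -/
def pnorm2 (z : ℝ × ℝ) : ℝ := max |z.1| (Real.sqrt |z.2|)

/-- The parabolic cube of radius `r` centered at `z₀` in `ℝ²`. -/
def pCube2 (z₀ : ℝ × ℝ) (r : ℝ) : Set (ℝ × ℝ) := {z | pnorm2 (z - z₀) < r}

/-- The set of mean oscillations `⨍_Q |u - u_Q|` of `u` over parabolic cubes `Q ⊆ O`. -/
def oscSet2 (O : Set (ℝ × ℝ)) (u : ℝ × ℝ → ℝ) : Set ℝ :=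
  {v | ∃ z₀ r, 0 < r ∧ pCube2 z₀ r ⊆ O ∧
    v = ⨍ z in pCube2 z₀ r, |u z - ⨍ w in pCube2 z₀ r, u w|}

/-- The parabolic BMO norm of `u` over `O ⊆ ℝ²`. -/
def pBMO2 (O : Set (ℝ × ℝ)) (u : ℝ × ℝ → ℝ) : ℝ := sSup (oscSet2 O u)

/-- `log⁺ x = max (log x) 0`. -/
def logPlus (x : ℝ) : ℝ := max (Real.log x) 0

/-- The domain `Ω_T = (0,1) × (0,T)`. -/
def Omega (T : ℝ) : Set (ℝ × ℝ) := Set.Ioo (0 : ℝ) 1 ×ˢ Set.Ioo (0 : ℝ) T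

/-- The domain `Ω̂_T = (-1,2) × (0,T)`. -/
def OmegaHat (T : ℝ) : Set (ℝ × ℝ) := Set.Ioo (-1 : ℝ) 2 ×ˢ Set.Ioo (0 : ℝ) T

/-- The domain `Ω̃_T = (-1,2) × (-T,2T)`. -/
def OmegaTilde (T : ℝ) : Set (ℝ × ℝ) := Set.Ioo (-1 : ℝ) 2 ×ˢ Set.Ioo (-T) (2 * T)

/-- The spatial reflection extension of `u` from `[0,1]` to `(-1,2)` (in the `x` variable). -/
def extSpace (u : ℝ × ℝ → ℝ) : ℝ × ℝ → ℝ := fun p =>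
  if p.1 < 0 then -3 * u (-p.1, p.2) + 4 * u (-p.1 / 2, p.2)
  else if 1 < p.1 then -3 * u (2 - p.1, p.2) + 4 * u ((3 - p.1) / 2, p.2)
  else u p

/-- The temporal reflection extension from `[0,T]` to `(-T,2T)` (in the `t` variable). -/
def extTime (T : ℝ) (v : ℝ × ℝ → ℝ) : ℝ × ℝ → ℝ := fun p =>
  if p.2 < 0 then v (p.1, -p.2)
  else if T < p.2 then v (p.1, 2 * T - p.2)
  else v p

/-- The reflection extension `ũ` of `u` from `Ω_T` to `Ω̃_T = (-1,2) × (-T,2T)`. -/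
def uext (T : ℝ) (u : ℝ × ℝ → ℝ) : ℝ × ℝ → ℝ := extTime T (extSpace u)

/-- The reflection extension `ũ`, extended by `0` outside `Ω̃_T`. -/
def uextZ (T : ℝ) (u : ℝ × ℝ → ℝ) : ℝ × ℝ → ℝ :=
  (OmegaTilde T).indicator (uext T u)

/-- The partial derivative `u_x`. -/
def Dx2 (u : ℝ × ℝ → ℝ) : ℝ × ℝ → ℝ := fun p => fderiv ℝ u p (1, 0)

/-- The partial derivative `u_t`. -/
def Dt2 (u : ℝ × ℝ → ℝ) : ℝ × ℝ → ℝ := fun p => fderiv ℝ u p (0, 1)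

/-- The `L²(O)` norm. -/
def L2norm2 (O : Set (ℝ × ℝ)) (v : ℝ × ℝ → ℝ) : ℝ :=
  (eLpNorm v 2 (volume.restrict O)).toReal

/-- The parabolic Sobolev norm
`‖u‖_{W₂^{2,1}(O)} = ‖u‖_{L²} + ‖u_x‖_{L²} + ‖u_{xx}‖_{L²} + ‖u_t‖_{L²}`. -/
def W21norm (O : Set (ℝ × ℝ)) (u : ℝ × ℝ → ℝ) : ℝ :=
  L2norm2 O u + L2norm2 O (Dx2 u) + L2norm2 O (Dx2 (Dx2 u)) + L2norm2 O (Dt2 u)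

open scoped NNReal

/-!
Let `φ_k` fold `Ω̃_T` onto the closure of `Ω_T`, a point beyond an end of the space interval being
reflected with its distance to that end multiplied by `k`. Then `ũ = -3 u ∘ φ₁ + 4 u ∘ φ_{1/2}`.
Since `φ_k` is nonexpansive in each variable, a small cube in `Ω̃_T` is folded into (the closure of)
a cube of the same radius in `Ω_T`, and since `φ_k` pushes Lebesgue measure forward to at most a
multiple of itself, the mean oscillation of `ũ` over the former cube is controlled by those of `u`
over such cubes, and the `L¹` norm of `ũ` by that of `u`.

It remains to multiply by the cut-off `Ψ`. The mean oscillation of `Ψ ũ` over a cube `Q` of radius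
`r` is at most a multiple of that of `ũ` plus `r |ũ_Q|`. By comparison of `Q` with its successive
doubles, `|ũ_Q|` grows only like `log (1 / r)` as `r → 0`, so `r |ũ_Q|` stays bounded. Large cubes
are handled by the `L¹` norm, and small cubes not contained in `Ω̃_T` do not meet the support of
`Ψ`.
-/

section MeanOscillation

variable {α E : Type*} [MeasurableSpace α] [NormedAddCommGroup E] [NormedSpace ℝ E]
  {μ : Measure α}

lemma average_mono_ae {f g : α → ℝ} (hf : Integrable f μ) (hg : Integrable g μ)
    (h : f ≤ᵐ[μ] g) : ⨍ x, f x ∂μ ≤ ⨍ x, g x ∂μ :=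
  integral_mono_ae hf.to_average hg.to_average (Measure.ae_smul_measure h _)

lemma average_add_const [CompleteSpace E] [IsFiniteMeasure μ] [NeZero μ] {f : α → E}
    (hf : Integrable f μ) (c : E) : ⨍ x, (f x + c) ∂μ = ⨍ x, f x ∂μ + c := by
  simp only [average_eq', integral_add hf.to_average (integrable_const c), integral_const,
    probReal_univ, one_smul]

lemma norm_average_sub_le [CompleteSpace E] [IsFiniteMeasure μ] [NeZero μ] {f : α → E}
    (hf : Integrable f μ) (c : E) : ‖⨍ x, f x ∂μ - c‖ ≤ ⨍ x, ‖f x - c‖ ∂μ := by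
  calc ‖⨍ x, f x ∂μ - c‖ = ‖⨍ x, (f x - c) ∂μ‖ := by
        simp only [sub_eq_add_neg, average_add_const hf]
    _ ≤ ⨍ x, ‖f x - c‖ ∂μ := norm_integral_le_integral_norm _

/-- The mean oscillation `⨍ ‖f - ⨍ f‖` of `f`; the measure `μ` is typically the restriction of an
ambient measure to a cube. -/
def meanOsc (μ : Measure α) (f : α → E) : ℝ := ⨍ x, ‖f x - ⨍ y, f y ∂μ‖ ∂μ

lemma meanOsc_nonneg (μ : Measure α) (f : α → E) : 0 ≤ meanOsc μ f :=
  integral_nonneg fun _ => norm_nonneg _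

lemma meanOsc_congr_ae {f g : α → E} (h : f =ᵐ[μ] g) : meanOsc μ f = meanOsc μ g := by
  unfold meanOsc
  rw [average_congr h]
  exact average_congr (h.mono fun x hx => by simp only [hx])

lemma meanOsc_le_two_mul_average_norm_sub [CompleteSpace E] [IsFiniteMeasure μ] {f : α → E}
    (hf : Integrable f μ) (c : E) : meanOsc μ f ≤ 2 * ⨍ x, ‖f x - c‖ ∂μ := by
  rcases eq_zero_or_neZero μ with rfl | _
  · simp [meanOsc]
  have hfc : Integrable (fun x => ‖f x - c‖) μ := (hf.sub (integrable_const c)).norm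
  calc meanOsc μ f
      ≤ ⨍ x, (‖f x - c‖ + ‖⨍ y, f y ∂μ - c‖) ∂μ :=
        average_mono_ae (hf.sub (integrable_const _)).norm (hfc.add (integrable_const _))
          (.of_forall fun x => by
            simpa only [norm_sub_rev c] using norm_sub_le_norm_sub_add_norm_sub (f x) c _)
    _ = ⨍ x, ‖f x - c‖ ∂μ + ‖⨍ y, f y ∂μ - c‖ :=
        average_add_const hfc _
    _ ≤ 2 * ⨍ x, ‖f x - c‖ ∂μ := by linarith [norm_average_sub_le hf c]

lemma meanOsc_smul_le [CompleteSpace E] [IsFiniteMeasure μ] {ψ : α → ℝ} {f : α → E}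
    (hψ : AEStronglyMeasurable ψ μ) (hf : Integrable f μ) {M κ δ : ℝ}
    (hM : ∀ᵐ x ∂μ, |ψ x| ≤ M) (hδ : ∀ᵐ x ∂μ, |ψ x - κ| ≤ δ) :
    meanOsc μ (fun x => ψ x • f x) ≤ 2 * (M * meanOsc μ f + δ * ‖⨍ x, f x ∂μ‖) := by
  rcases eq_zero_or_neZero μ with rfl | _
  · simp [meanOsc]
  set c := ⨍ x, f x ∂μ
  have hψf : Integrable (fun x => ψ x • f x) μ := hf.bdd_smul M hψ hM
  have hfc : Integrable (fun x => M * ‖f x - c‖) μ :=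
    (hf.sub (integrable_const c)).norm.const_mul M
  refine (meanOsc_le_two_mul_average_norm_sub hψf (κ • c)).trans ?_
  gcongr
  calc ⨍ x, ‖ψ x • f x - κ • c‖ ∂μ
      ≤ ⨍ x, (M * ‖f x - c‖ + δ * ‖c‖) ∂μ := by
        refine average_mono_ae (hψf.sub (integrable_const _)).norm (hfc.add (integrable_const _)) ?_
        filter_upwards [hM, hδ] with x hMx hδx
        calc ‖ψ x • f x - κ • c‖ = ‖ψ x • (f x - c) + (ψ x - κ) • c‖ := by congr 1; module
          _ ≤ |ψ x| * ‖f x - c‖ + |ψ x - κ| * ‖c‖ := by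
            simpa only [norm_smul, Real.norm_eq_abs] using
              norm_add_le (ψ x • (f x - c)) ((ψ x - κ) • c)
          _ ≤ M * ‖f x - c‖ + δ * ‖c‖ := by gcongr
    _ = M * meanOsc μ f + δ * ‖c‖ := by
        rw [average_add_const hfc, average_eq', integral_const_mul]
        rfl

lemma norm_setAverage_sub_setAverage_le [CompleteSpace E] {f : α → E} {s t : Set α} (hst : s ⊆ t)
    (hs : μ s ≠ 0) (ht : μ t ≠ ⊤) (hf : IntegrableOn f t μ) :
    ‖⨍ x in s, f x ∂μ - ⨍ x in t, f x ∂μ‖ ≤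
      μ.real t / μ.real s * meanOsc (μ.restrict t) f := by
  set c := ⨍ x in t, f x ∂μ with hc
  have hμs : μ s ≠ ⊤ := measure_ne_top_of_subset hst ht
  have hμt : μ.real t ≠ 0 :=
    (ENNReal.toReal_pos (fun h => hs (measure_mono_null hst h)) ht).ne'
  have : NeZero (μ.restrict s) := ⟨by rwa [Ne, Measure.restrict_eq_zero]⟩
  have : IsFiniteMeasure (μ.restrict s) := isFiniteMeasure_restrict.2 hμs
  have : IsFiniteMeasure (μ.restrict t) := isFiniteMeasure_restrict.2 ht
  have hfc : IntegrableOn (fun x => ‖f x - c‖) t μ := (hf.sub (integrable_const c)).norm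
  calc ‖⨍ x in s, f x ∂μ - c‖
      ≤ ⨍ x in s, ‖f x - c‖ ∂μ := norm_average_sub_le (hf.mono_set hst) c
    _ = (μ.real s)⁻¹ * ∫ x in s, ‖f x - c‖ ∂μ := by rw [setAverage_eq, smul_eq_mul]
    _ ≤ (μ.real s)⁻¹ * ∫ x in t, ‖f x - c‖ ∂μ := by
        gcongr
        exact .of_forall fun _ => norm_nonneg _
    _ = μ.real t / μ.real s * meanOsc (μ.restrict t) f := by
        rw [meanOsc, setAverage_eq, ← hc, smul_eq_mul]
        field_simp [hμt]

end MeanOscillation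

section Pushforward

variable {α β E : Type*} [MeasurableSpace α] [MeasurableSpace β] [NormedAddCommGroup E]
  {μ : Measure α} {ν : Measure β} {φ : α → β} {c : ℝ≥0}

lemma map_restrict_le_of_mapsTo (hφ : Measurable φ) (h : μ.map φ ≤ c • ν) {s : Set α} {t : Set β}
    (ht : MeasurableSet t) (hst : Set.MapsTo φ s t) :
    (μ.restrict s).map φ ≤ c • ν.restrict t :=
  calc (μ.restrict s).map φ ≤ (μ.restrict (φ ⁻¹' t)).map φ :=
        Measure.map_mono (Measure.restrict_mono_set μ hst) hφ
    _ = (μ.map φ).restrict t := (Measure.restrict_map hφ ht).symm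
    _ ≤ (c • ν).restrict t := Measure.restrict_mono_measure h t
    _ = c • ν.restrict t := Measure.restrict_smul c ν t

lemma integrable_comp_of_map_le (hφ : Measurable φ) (h : μ.map φ ≤ c • ν) {f : β → E}
    (hf : Integrable f ν) : Integrable (fun x => f (φ x)) μ :=
  (hf.smul_measure_nnreal.mono_measure h).comp_measurable hφ

lemma integral_norm_comp_le_of_map_le (hφ : Measurable φ) (h : μ.map φ ≤ c • ν) {f : β → E}
    (hf : Integrable f ν) : ∫ x, ‖f (φ x)‖ ∂μ ≤ c * ∫ y, ‖f y‖ ∂ν := by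
  have hfc : Integrable (fun y => ‖f y‖) (c • ν) := hf.norm.smul_measure_nnreal
  calc ∫ x, ‖f (φ x)‖ ∂μ = ∫ y, ‖f y‖ ∂(μ.map φ) :=
        (integral_map hφ.aemeasurable (hfc.mono_measure h).aestronglyMeasurable).symm
    _ ≤ ∫ y, ‖f y‖ ∂(c • ν) :=
        integral_mono_measure h (.of_forall fun _ => norm_nonneg _) hfc
    _ = c * ∫ y, ‖f y‖ ∂ν := by rw [integral_smul_nnreal_measure]; rfl

end Pushforward

section ParabolicCube

variable {z : ℝ × ℝ} {r s : ℝ}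

lemma pCube2_eq_prod (hr : 0 < r) :
    pCube2 z r = Set.Ioo (z.1 - r) (z.1 + r) ×ˢ Set.Ioo (z.2 - r ^ 2) (z.2 + r ^ 2) := by
  ext p
  simp only [pCube2, pnorm2, Set.mem_ofPred_eq, max_lt_iff, Real.sqrt_lt' hr, Prod.fst_sub,
    Prod.snd_sub, abs_sub_lt_iff, Set.mem_prod, Set.mem_Ioo]
  constructor <;> rintro ⟨⟨h₁, h₂⟩, h₃, h₄⟩ <;> refine ⟨⟨?_, ?_⟩, ?_, ?_⟩ <;> linarith

lemma mem_pCube2_self (hr : 0 < r) : z ∈ pCube2 z r := by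
  simpa [pCube2, pnorm2] using hr

lemma pCube2_subset_pCube2 (h : s ≤ r) : pCube2 z s ⊆ pCube2 z r :=
  fun _ hp => lt_of_lt_of_le hp h

lemma dist_lt_of_mem_pCube2 {p : ℝ × ℝ} (hr : r ≤ 1) (hp : p ∈ pCube2 z r) :
    dist p z < r := by
  obtain ⟨hp₁, hp₂⟩ : |p.1 - z.1| < r ∧ √|p.2 - z.2| < r := max_lt_iff.1 hp
  have hr₀ : 0 < r := (abs_nonneg _).trans_lt hp₁
  have hp₂' : |p.2 - z.2| < r ^ 2 := (Real.sqrt_lt' hr₀).1 hp₂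
  exact max_lt hp₁ (hp₂'.trans_le (pow_le_of_le_one hr₀.le hr two_ne_zero))

lemma measurableSet_pCube2 (z : ℝ × ℝ) (r : ℝ) : MeasurableSet (pCube2 z r) := by
  have : Continuous fun p => pnorm2 (p - z) := by unfold pnorm2; fun_prop
  exact (isOpen_lt this continuous_const).measurableSet

lemma volume_real_pCube2 (hr : 0 < r) : volume.real (pCube2 z r) = 4 * r ^ 3 := by
  rw [pCube2_eq_prod hr, Measure.volume_eq_prod, measureReal_prod_prod,
    Real.volume_real_Ioo_of_le (by linarith), Real.volume_real_Ioo_of_le (by nlinarith)]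
  ring

lemma volume_pCube2_ne_zero (hr : 0 < r) : volume (pCube2 z r) ≠ 0 := fun h => by
  have : volume.real (pCube2 z r) = 0 := by rw [Measure.real, h, ENNReal.toReal_zero]
  rw [volume_real_pCube2 hr] at this
  exact (by positivity : 4 * r ^ 3 ≠ 0) this

lemma volume_pCube2_ne_top (hr : 0 < r) : volume (pCube2 z r) ≠ ⊤ := fun h => by
  have : volume.real (pCube2 z r) = 0 := by rw [Measure.real, h, ENNReal.toReal_top]
  rw [volume_real_pCube2 hr] at this
  exact (by positivity : 4 * r ^ 3 ≠ 0) this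

lemma isFiniteMeasure_restrict_pCube2 (hr : 0 < r) :
    IsFiniteMeasure (volume.restrict (pCube2 z r)) :=
  isFiniteMeasure_restrict.2 (volume_pCube2_ne_top hr)

lemma average_pCube2_eq (hr : 0 < r) (f : ℝ × ℝ → ℝ) :
    ⨍ p in pCube2 z r, f p = (4 * r ^ 3)⁻¹ * ∫ p in pCube2 z r, f p := by
  rw [setAverage_eq, volume_real_pCube2 hr, smul_eq_mul]

end ParabolicCube

section ParabolicBMO

variable {O : Set (ℝ × ℝ)} {u v : ℝ × ℝ → ℝ} {z : ℝ × ℝ} {r s r₀ A : ℝ}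

lemma pBMO2_nonneg (O : Set (ℝ × ℝ)) (u : ℝ × ℝ → ℝ) : 0 ≤ pBMO2 O u :=
  Real.sSup_nonneg fun _ ⟨_, _, _, _, h⟩ => h ▸ meanOsc_nonneg _ u

lemma meanOsc_le_pBMO2 (hu : BddAbove (oscSet2 O u)) (hr : 0 < r) (hz : pCube2 z r ⊆ O) :
    meanOsc (volume.restrict (pCube2 z r)) u ≤ pBMO2 O u :=
  le_csSup hu ⟨z, r, hr, hz, rfl⟩

lemma abs_average_pCube2_sub_le (hs : 0 < s) (hsr : s ≤ r) (hrs : r ≤ 2 * s)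
    (hv : IntegrableOn v (pCube2 z r)) :
    |(⨍ p in pCube2 z s, v p) - ⨍ p in pCube2 z r, v p| ≤
      8 * meanOsc (volume.restrict (pCube2 z r)) v := by
  have hr : 0 < r := hs.trans_le hsr
  refine (norm_setAverage_sub_setAverage_le (pCube2_subset_pCube2 hsr) (volume_pCube2_ne_zero hs)
    (volume_pCube2_ne_top hr) hv).trans (mul_le_mul_of_nonneg_right ?_ (meanOsc_nonneg _ v))
  rw [volume_real_pCube2 hr, volume_real_pCube2 hs, div_le_iff₀ (by positivity)]
  calc 4 * r ^ 3 ≤ 4 * (2 * s) ^ 3 := by gcongr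
    _ = 8 * (4 * s ^ 3) := by ring

lemma abs_average_pCube2_le_add_nat_mul (hv : IntegrableOn v (pCube2 z r₀))
    (hA : ∀ s, 0 < s → s ≤ r₀ → meanOsc (volume.restrict (pCube2 z s)) v ≤ A) (n : ℕ) :
    ∀ r, 0 < r → r ≤ r₀ → r₀ ≤ 2 ^ n * r →
      |⨍ p in pCube2 z r, v p| ≤ |⨍ p in pCube2 z r₀, v p| + 8 * n * A := by
  induction n with
  | zero =>
    intro r _ hr hr₀
    obtain rfl : r = r₀ := le_antisymm hr (by simpa using hr₀)
    simp
  | succ n ih =>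
    intro r hr hrr₀ hn
    have h2r : r ≤ min (2 * r) r₀ := le_min (by linarith) hrr₀
    have hmin : 0 < min (2 * r) r₀ := hr.trans_le h2r
    have coarse := ih (min (2 * r) r₀) hmin (min_le_right _ _) <| by
      rw [mul_min_of_nonneg _ _ (by positivity)]
      exact le_min (by rw [pow_succ] at hn; linarith)
        (le_mul_of_one_le_left (hr.le.trans hrr₀) (one_le_pow₀ one_le_two))
    have step := (abs_average_pCube2_sub_le hr h2r (min_le_left _ _)
      (hv.mono_set (pCube2_subset_pCube2 (min_le_right _ _)))).trans
        (mul_le_mul_of_nonneg_left (hA _ hmin (min_le_right _ _)) (by norm_num))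
    have := abs_sub_abs_le_abs_sub (⨍ p in pCube2 z r, v p)
      (⨍ p in pCube2 z (min (2 * r) r₀), v p)
    push_cast
    linarith

lemma mul_abs_average_pCube2_le (hv : IntegrableOn v (pCube2 z r₀))
    (hA : ∀ s, 0 < s → s ≤ r₀ → meanOsc (volume.restrict (pCube2 z s)) v ≤ A)
    (hr : 0 < r) (hrr₀ : r ≤ r₀) :
    r * |⨍ p in pCube2 z r, v p| ≤ r₀ * (|⨍ p in pCube2 z r₀, v p| + 8 * A) := by
  have hA₀ : 0 ≤ A := (meanOsc_nonneg _ v).trans (hA r hr hrr₀)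
  obtain ⟨m, hm, hm'⟩ := exists_nat_pow_near ((one_le_div hr).2 hrr₀) one_lt_two
  rw [le_div_iff₀ hr] at hm
  rw [div_lt_iff₀ hr] at hm'
  have hnat : ((m + 1 : ℕ) : ℝ) ≤ 2 ^ m := by exact_mod_cast Nat.lt_two_pow_self
  calc r * |⨍ p in pCube2 z r, v p|
      ≤ r * (|⨍ p in pCube2 z r₀, v p| + 8 * (m + 1 : ℕ) * A) := by
        gcongr
        exact abs_average_pCube2_le_add_nat_mul hv hA (m + 1) r hr hrr₀ hm'.le
    _ = r * |⨍ p in pCube2 z r₀, v p| + (m + 1 : ℕ) * r * (8 * A) := by ring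
    _ ≤ r₀ * |⨍ p in pCube2 z r₀, v p| + r₀ * (8 * A) := by
        gcongr
        exact (mul_le_mul_of_nonneg_right hnat hr.le).trans hm
    _ = r₀ * (|⨍ p in pCube2 z r₀, v p| + 8 * A) := by ring

lemma average_abs_pCube2_le (hr₀ : 0 < r₀) (hr : r₀ ≤ r) (hv : Integrable v) :
    ⨍ p in pCube2 z r, |v p| ≤ (4 * r₀ ^ 3)⁻¹ * ∫ p, |v p| := by
  rw [average_pCube2_eq (hr₀.trans_le hr)]
  gcongr
  · exact .of_forall fun _ => abs_nonneg _
  · exact hv.abs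
  · exact Measure.restrict_le_self

end ParabolicBMO

section Localization

variable {O S : Set (ℝ × ℝ)} {v ψ : ℝ × ℝ → ℝ} {z : ℝ × ℝ} {r r₀ A M : ℝ}

lemma exists_forall_pCube2_subset (hS : IsCompact S) (hO : IsOpen O) (hSO : S ⊆ O) :
    ∃ δ, 0 < δ ∧ ∀ z r, r ≤ δ → (pCube2 z r ∩ S).Nonempty → pCube2 z r ⊆ O := by
  obtain ⟨δ, hδ, hδO⟩ := hS.exists_thickening_subset_open hO hSO
  refine ⟨min 1 (δ / 2), by positivity, fun z r hr ⟨q, hqz, hqS⟩ p hpz => hδO ?_⟩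
  obtain ⟨hr₁, hrδ⟩ := le_min_iff.1 hr
  rw [Metric.mem_thickening_iff]
  refine ⟨q, hqS, (dist_triangle_right p q z).trans_lt ?_⟩
  linarith [dist_lt_of_mem_pCube2 hr₁ hpz, dist_lt_of_mem_pCube2 hr₁ hqz]

lemma meanOsc_mul_pCube2_le_of_ge (hr₀ : 0 < r₀) (hr : r₀ ≤ r) (hψ : Continuous ψ)
    (hM : ∀ p, |ψ p| ≤ M) (hv : Integrable v) :
    meanOsc (volume.restrict (pCube2 z r)) (fun p => ψ p * v p) ≤
      2 * (M * ((4 * r₀ ^ 3)⁻¹ * ∫ p, |v p|)) := by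
  have hψv : Integrable (fun p => ψ p * v p) :=
    hv.bdd_mul hψ.aestronglyMeasurable (.of_forall hM)
  have := isFiniteMeasure_restrict_pCube2 (z := z) (hr₀.trans_le hr)
  calc meanOsc (volume.restrict (pCube2 z r)) (fun p => ψ p * v p)
      ≤ 2 * ⨍ p in pCube2 z r, ‖ψ p * v p - 0‖ :=
        meanOsc_le_two_mul_average_norm_sub hψv.restrict 0
    _ ≤ 2 * ((4 * r₀ ^ 3)⁻¹ * ∫ p, |ψ p * v p|) := by
        simp only [sub_zero]
        gcongr
        exact average_abs_pCube2_le hr₀ hr hψv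
    _ ≤ 2 * ((4 * r₀ ^ 3)⁻¹ * ∫ p, M * |v p|) := by
        gcongr ?_ * (_ * ?_)
        refine integral_mono hψv.abs (hv.abs.const_mul M) fun p => ?_
        simpa only [abs_mul] using mul_le_mul_of_nonneg_right (hM p) (abs_nonneg (v p))
    _ = 2 * (M * ((4 * r₀ ^ 3)⁻¹ * ∫ p, |v p|)) := by rw [integral_const_mul]; ring

lemma meanOsc_mul_pCube2_le_of_le {K : ℝ≥0} (hr : 0 < r) (hrr₀ : r ≤ r₀) (hr₀ : r₀ ≤ 1)
    (hψ : LipschitzWith K ψ) (hM : ∀ p, |ψ p| ≤ M) (hv : Integrable v)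
    (hA : ∀ s, 0 < s → s ≤ r₀ → meanOsc (volume.restrict (pCube2 z s)) v ≤ A) :
    meanOsc (volume.restrict (pCube2 z r)) (fun p => ψ p * v p) ≤
      2 * (M * A + K * (r₀ * ((4 * r₀ ^ 3)⁻¹ * (∫ p, |v p|) + 8 * A))) := by
  have hr₀' : 0 < r₀ := hr.trans_le hrr₀
  have hM₀ : 0 ≤ M := (abs_nonneg _).trans (hM z)
  have := isFiniteMeasure_restrict_pCube2 (z := z) hr
  have hδ : ∀ᵐ p ∂volume.restrict (pCube2 z r), |ψ p - ψ z| ≤ K * r := by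
    filter_upwards [ae_restrict_mem (measurableSet_pCube2 z r)] with p hp
    exact (hψ.dist_le_mul p z).trans <|
      mul_le_mul_of_nonneg_left (dist_lt_of_mem_pCube2 (hrr₀.trans hr₀) hp).le K.coe_nonneg
  calc meanOsc (volume.restrict (pCube2 z r)) (fun p => ψ p * v p)
      ≤ 2 * (M * meanOsc (volume.restrict (pCube2 z r)) v + K * r * |⨍ p in pCube2 z r, v p|) :=
        meanOsc_smul_le hψ.continuous.aestronglyMeasurable hv.restrict (.of_forall hM) hδ
    _ ≤ 2 * (M * A + K * (r₀ * (|⨍ p in pCube2 z r₀, v p| + 8 * A))) := by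
        rw [mul_assoc]
        gcongr ?_ * (_ * ?_ + _ * ?_)
        · exact hA r hr hrr₀
        · exact mul_abs_average_pCube2_le hv.integrableOn hA hr hrr₀
    _ ≤ 2 * (M * A + K * (r₀ * ((4 * r₀ ^ 3)⁻¹ * (∫ p, |v p|) + 8 * A))) := by
        gcongr
        exact (norm_integral_le_integral_norm v).trans (average_abs_pCube2_le hr₀' le_rfl hv)

lemma meanOsc_mul_pCube2_le_of_disjoint (h : Disjoint (pCube2 z r) (tsupport ψ)) (hA : 0 ≤ A) :
    meanOsc (volume.restrict (pCube2 z r)) (fun p => ψ p * v p) ≤ A := by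
  have : (fun p => ψ p * v p) =ᵐ[volume.restrict (pCube2 z r)] 0 := by
    filter_upwards [ae_restrict_mem (measurableSet_pCube2 z r)] with p hp
    simp [image_eq_zero_of_notMem_tsupport (h.notMem_of_mem_left hp)]
  rw [meanOsc_congr_ae this]
  simpa [meanOsc] using hA

lemma meanOsc_mul_pCube2_le {K : ℝ≥0} (hr₀ : 0 < r₀) (hr₀_one : r₀ ≤ 1) (hψ : LipschitzWith K ψ)
    (hM : ∀ p, |ψ p| ≤ M) (hv : Integrable v) (hA₀ : 0 ≤ A)
    (hA : (pCube2 z r₀ ∩ tsupport ψ).Nonempty →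
      ∀ s, 0 < s → s ≤ r₀ → meanOsc (volume.restrict (pCube2 z s)) v ≤ A) (hr : 0 < r) :
    meanOsc (volume.restrict (pCube2 z r)) (fun p => ψ p * v p) ≤
      2 * ((M + K * r₀) * ((4 * r₀ ^ 3)⁻¹ * ∫ p, |v p|) + (M + 8 * K * r₀) * A) := by
  have hM₀ : 0 ≤ M := (abs_nonneg _).trans (hM z)
  have hI : 0 ≤ (4 * r₀ ^ 3)⁻¹ * ∫ p, |v p| :=
    mul_nonneg (by positivity) (integral_nonneg fun _ => abs_nonneg _)
  by_cases hdisj : Disjoint (pCube2 z r) (tsupport ψ)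
  · exact meanOsc_mul_pCube2_le_of_disjoint hdisj (by positivity)
  rcases le_total r₀ r with hlarge | hsmall
  · refine (meanOsc_mul_pCube2_le_of_ge hr₀ hlarge hψ.continuous hM hv).trans ?_
    gcongr
    exact le_add_of_le_of_nonneg (by gcongr; exact le_add_of_nonneg_right (by positivity))
      (by positivity)
  · have hmeet : (pCube2 z r₀ ∩ tsupport ψ).Nonempty :=
      (Set.not_disjoint_iff_nonempty_inter.1 hdisj).mono <|
        Set.inter_subset_inter_left _ (pCube2_subset_pCube2 hsmall)
    refine (meanOsc_mul_pCube2_le_of_le hr hsmall hr₀_one hψ hM hv (hA hmeet)).trans ?_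
    linarith [mul_nonneg hM₀ hI]

theorem exists_meanOsc_mul_pCube2_le {K : ℝ≥0} (hψ : LipschitzWith K ψ) (hψc : HasCompactSupport ψ)
    (hO : IsOpen O) (hψO : tsupport ψ ⊆ O) {r₁ : ℝ} (hr₁ : 0 < r₁) :
    ∃ C, 0 < C ∧ ∀ v : ℝ × ℝ → ℝ, ∀ A, Integrable v → 0 ≤ A →
      (∀ z r, 0 < r → r ≤ r₁ → pCube2 z r ⊆ O → meanOsc (volume.restrict (pCube2 z r)) v ≤ A) →
      ∀ z r, 0 < r →
        meanOsc (volume.restrict (pCube2 z r)) (fun p => ψ p * v p) ≤ C * (A + ∫ p, |v p|) := by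
  obtain ⟨M, hM₀, hM⟩ : ∃ M, 0 < M ∧ ∀ p, |ψ p| ≤ M := by
    obtain ⟨M, hM⟩ := hψc.exists_bound_of_continuous hψ.continuous
    exact ⟨max M 1, by positivity, fun p => le_max_of_le_left (hM p)⟩
  obtain ⟨δ, hδ, hδO⟩ := exists_forall_pCube2_subset hψc hO hψO
  obtain ⟨r₀, hr₀, hr₀_le⟩ := exists_between (show 0 < min 1 (min r₁ δ) by positivity)
  obtain ⟨hr₀_one, hr₀r₁, hr₀δ⟩ : r₀ < 1 ∧ r₀ < r₁ ∧ r₀ < δ := by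
    simpa only [lt_min_iff] using hr₀_le
  refine ⟨2 * ((M + K * r₀) * (4 * r₀ ^ 3)⁻¹ + (M + 8 * K * r₀)), by positivity, ?_⟩
  intro v A hv hA₀ hA z r hr
  have hI : 0 ≤ ∫ p, |v p| := integral_nonneg fun _ => abs_nonneg _
  have hosc : (pCube2 z r₀ ∩ tsupport ψ).Nonempty →
      ∀ s, 0 < s → s ≤ r₀ → meanOsc (volume.restrict (pCube2 z s)) v ≤ A := fun hmeet s hs hsr =>
    hA z s hs (hsr.trans hr₀r₁.le) ((pCube2_subset_pCube2 hsr).trans (hδO z r₀ hr₀δ.le hmeet))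
  calc meanOsc (volume.restrict (pCube2 z r)) (fun p => ψ p * v p)
      ≤ 2 * ((M + K * r₀) * ((4 * r₀ ^ 3)⁻¹ * ∫ p, |v p|) + (M + 8 * K * r₀) * A) :=
        meanOsc_mul_pCube2_le hr₀ hr₀_one.le hψ hM hv hA₀ hosc hr
    _ = 2 * ((M + K * r₀) * (4 * r₀ ^ 3)⁻¹) * (∫ p, |v p|) + 2 * (M + 8 * K * r₀) * A := by ring
    _ ≤ 2 * ((M + K * r₀) * (4 * r₀ ^ 3)⁻¹ + (M + 8 * K * r₀)) * (A + ∫ p, |v p|) := by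
        set a := (M + K * r₀) * (4 * r₀ ^ 3)⁻¹
        have ha : 0 ≤ a := by positivity
        have hb : 0 ≤ M + 8 * K * r₀ := by positivity
        linarith [mul_nonneg ha hA₀, mul_nonneg hb hI]

end Localization

section Folding

variable {S T k r : ℝ}

/-- The folding of the line onto `[0, S]`: points outside are reflected at the nearer endpoint,
their distance to it being multiplied by `k`. Foldings in space (`k = 1` and `k = 1 / 2`) and in
time (`k = 1`) express the reflection extension. -/
def foldInterval (S k x : ℝ) : ℝ :=
  if x < 0 then -k * x else if S < x then S - k * (x - S) else x

lemma measurable_foldInterval (S k : ℝ) : Measurable (foldInterval S k) :=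
  Measurable.ite measurableSet_Iio (by fun_prop) <|
    Measurable.ite measurableSet_Ioi (by fun_prop) measurable_id

lemma abs_foldInterval_sub_le (hS : 0 ≤ S) (hk₀ : 0 ≤ k) (hk₁ : k ≤ 1) (x y : ℝ) :
    |foldInterval S k x - foldInterval S k y| ≤ |x - y| := by
  wlog hxy : x ≤ y generalizing x y
  · rw [abs_sub_comm, abs_sub_comm x]
    exact this y x (le_of_not_ge hxy)
  rw [abs_sub_comm x, abs_of_nonneg (sub_nonneg.2 hxy), abs_le]
  unfold foldInterval
  constructor <;> split_ifs <;> nlinarith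

lemma foldInterval_mem_Icc (hk₀ : 0 ≤ k) (hk₁ : k ≤ 1) {x : ℝ} (hx : x ∈ Set.Ioo (-S) (2 * S)) :
    foldInterval S k x ∈ Set.Icc 0 S := by
  obtain ⟨h₁, h₂⟩ := hx
  unfold foldInterval
  split_ifs <;> constructor <;> nlinarith

lemma map_foldInterval_volume_le (S : ℝ) (hk : k ≠ 0) :
    volume.map (foldInterval S k) ≤ (1 + 2 * ‖k⁻¹‖₊) • (volume : Measure ℝ) := by
  refine Measure.le_iff.2 fun s hs => ?_
  have hvol : ∀ t : Set ℝ, volume ((-k * ·) ⁻¹' t) = ‖k⁻¹‖₊ * volume t := fun t => by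
    rw [Real.volume_preimage_mul_left (neg_ne_zero.2 hk), inv_neg, abs_neg,
      ← Real.enorm_eq_ofReal_abs]
    rfl
  have hreflect : ∀ x, -k * x + (S + k * S) = S - k * (x - S) := fun x => by ring
  have hsub : foldInterval S k ⁻¹' s ⊆
      s ∪ ((-k * ·) ⁻¹' s ∪ (-k * ·) ⁻¹' ((· + (S + k * S)) ⁻¹' s)) := fun x hx => by
    simp only [Set.mem_preimage, foldInterval] at hx
    split_ifs at hx
    · exact .inr (.inl hx)
    · exact .inr (.inr (by simpa only [Set.mem_preimage, hreflect] using hx))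
    · exact .inl hx
  calc volume.map (foldInterval S k) s
      = volume (foldInterval S k ⁻¹' s) := Measure.map_apply (measurable_foldInterval S k) hs
    _ ≤ volume s + (‖k⁻¹‖₊ * volume s + ‖k⁻¹‖₊ * volume s) := by
        refine (measure_mono hsub).trans <| (measure_union_le _ _).trans <|
          add_le_add_right ((measure_union_le _ _).trans ?_) _
        rw [hvol, hvol, measure_preimage_add_right]
    _ = ((1 + 2 * ‖k⁻¹‖₊) • (volume : Measure ℝ)) s := by
        rw [Measure.smul_apply, ENNReal.smul_def, smul_eq_mul]
        push_cast
        ring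

lemma exists_mapsTo_foldInterval (hk₀ : 0 ≤ k) (hk₁ : k ≤ 1) {a ρ : ℝ} (hρ : 0 < ρ)
    (hρS : 2 * ρ ≤ S) (ha : Set.Ioo (a - ρ) (a + ρ) ⊆ Set.Ioo (-S) (2 * S)) :
    ∃ b, 0 ≤ b - ρ ∧ b + ρ ≤ S ∧
      Set.MapsTo (foldInterval S k) (Set.Ioo (a - ρ) (a + ρ)) (Set.Icc (b - ρ) (b + ρ)) := by
  have hS : 0 ≤ S := by linarith
  set c := foldInterval S k a
  refine ⟨max ρ (min c (S - ρ)), by simp, ?_, fun x hx => ?_⟩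
  · linarith [max_le (by linarith : ρ ≤ S - ρ) (min_le_right c (S - ρ))]
  have hmem := foldInterval_mem_Icc hk₀ hk₁ (ha hx)
  have hxa : |x - a| ≤ ρ := by rw [abs_le]; constructor <;> linarith [hx.1, hx.2]
  have hdist := abs_le.1 ((abs_foldInterval_sub_le hS hk₀ hk₁ x a).trans hxa)
  constructor
  · rw [sub_le_iff_le_add]
    exact max_le (by linarith [hmem.1]) ((min_le_left _ _).trans (by linarith [hdist.1]))
  · rw [← sub_le_iff_le_add]
    exact le_max_of_le_right (le_min (by linarith [hdist.2]) (by linarith [hmem.2]))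

/-- The folding of the plane onto the closure `[0, 1] × [0, T]` of `Omega T`, with factor `k` in
space and `1` in time. -/
def foldRect (T k : ℝ) : ℝ × ℝ → ℝ × ℝ := Prod.map (foldInterval 1 k) (foldInterval T 1)

lemma measurable_foldRect (T k : ℝ) : Measurable (foldRect T k) :=
  (measurable_foldInterval 1 k).prodMap (measurable_foldInterval T 1)

lemma map_foldRect_volume_le (T : ℝ) (hk : k ≠ 0) :
    volume.map (foldRect T k) ≤ (3 * (1 + 2 * ‖k⁻¹‖₊)) • (volume : Measure (ℝ × ℝ)) := by
  have htime : volume.map (foldInterval T 1) ≤ (3 : ℝ≥0) • (volume : Measure ℝ) := by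
    convert map_foldInterval_volume_le T one_ne_zero using 2
    norm_num
  calc volume.map (foldRect T k)
      = (volume.map (foldInterval 1 k)).prod (volume.map (foldInterval T 1)) :=
        (Measure.map_prod_map volume volume (measurable_foldInterval 1 k)
          (measurable_foldInterval T 1)).symm
    _ ≤ ((1 + 2 * ‖k⁻¹‖₊) • volume).prod ((3 : ℝ≥0) • volume) :=
        Measure.prod_mono (map_foldInterval_volume_le 1 hk) htime
    _ = (3 * (1 + 2 * ‖k⁻¹‖₊)) • volume := by
        rw [Measure.prod_smul_left, Measure.prod_smul_right, smul_smul, mul_comm]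
        rfl

lemma map_restrict_foldRect_le (hk : k ≠ 0) {s : Set (ℝ × ℝ)} {a b c d : ℝ}
    (hs : Set.MapsTo (foldRect T k) s (Set.Icc a b ×ˢ Set.Icc c d)) :
    (volume.restrict s).map (foldRect T k) ≤
      (3 * (1 + 2 * ‖k⁻¹‖₊)) • volume.restrict (Set.Ioo a b ×ˢ Set.Ioo c d) := by
  have hae : Set.Ioo a b ×ˢ Set.Ioo c d =ᵐ[volume] Set.Icc a b ×ˢ Set.Icc c d :=
    Measure.set_prod_ae_eq Ioo_ae_eq_Icc Ioo_ae_eq_Icc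
  rw [Measure.restrict_congr_set hae]
  exact map_restrict_le_of_mapsTo (measurable_foldRect T k) (map_foldRect_volume_le T hk)
    (measurableSet_Icc.prod measurableSet_Icc) hs

lemma map_restrict_OmegaTilde_foldRect_le (T : ℝ) (hk₀ : 0 < k) (hk₁ : k ≤ 1) :
    (volume.restrict (OmegaTilde T)).map (foldRect T k) ≤
      (3 * (1 + 2 * ‖k⁻¹‖₊)) • volume.restrict (Omega T) :=
  map_restrict_foldRect_le hk₀.ne' fun _ hp =>
    ⟨foldInterval_mem_Icc hk₀.le hk₁ (by simpa using hp.1),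
      foldInterval_mem_Icc zero_le_one le_rfl hp.2⟩

lemma exists_map_restrict_pCube2_foldRect_le (hk₀ : 0 < k) (hk₁ : k ≤ 1) {z : ℝ × ℝ} (hr : 0 < r)
    (hr₁ : 2 * r ≤ 1) (hrT : 2 * r ^ 2 ≤ T) (hz : pCube2 z r ⊆ OmegaTilde T) :
    ∃ z', pCube2 z' r ⊆ Omega T ∧ (volume.restrict (pCube2 z r)).map (foldRect T k) ≤
      (3 * (1 + 2 * ‖k⁻¹‖₊)) • volume.restrict (pCube2 z' r) := by
  have hmem : z ∈ pCube2 z r := mem_pCube2_self hr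
  rw [pCube2_eq_prod hr] at hz hmem ⊢
  obtain ⟨x', hx₀, hx₁, hxmaps⟩ :=
    exists_mapsTo_foldInterval (S := 1) (a := z.1) hk₀.le hk₁ hr hr₁ fun x hx => by
      simpa using (hz (Set.mk_mem_prod hx hmem.2)).1
  obtain ⟨t', ht₀, ht₁, htmaps⟩ :=
    exists_mapsTo_foldInterval (a := z.2) zero_le_one le_rfl (pow_pos hr 2) hrT fun t ht =>
      (hz (Set.mk_mem_prod hmem.1 ht)).2
  refine ⟨(x', t'), ?_, ?_⟩
  all_goals rw [pCube2_eq_prod hr]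
  · exact Set.prod_mono (Set.Ioo_subset_Ioo hx₀ hx₁) (Set.Ioo_subset_Ioo ht₀ ht₁)
  · exact map_restrict_foldRect_le hk₀.ne' fun p hp => ⟨hxmaps hp.1, htmaps hp.2⟩

end Folding

section ReflectionExtension

variable {T : ℝ} {u : ℝ × ℝ → ℝ}

lemma uext_eq_foldRect (T : ℝ) (u : ℝ × ℝ → ℝ) (z : ℝ × ℝ) :
    uext T u z = -3 * u (foldRect T 1 z) + 4 * u (foldRect T (1 / 2) z) := by
  have htime : uext T u z = extSpace u (z.1, foldInterval T 1 z.2) := by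
    unfold uext extTime foldInterval
    split_ifs
    · ring_nf
    · ring_nf
    · rfl
  have hspace (t : ℝ) : extSpace u (z.1, t) =
      -3 * u (foldInterval 1 1 z.1, t) + 4 * u (foldInterval 1 (1 / 2) z.1, t) := by
    unfold extSpace foldInterval
    dsimp only
    split_ifs <;> ring_nf
  rw [htime, hspace]
  rfl

section Measure

variable {μ ν₁ ν₂ : Measure (ℝ × ℝ)} {c₁ c₂ : ℝ≥0}

lemma integrable_uext (h₁ : μ.map (foldRect T 1) ≤ c₁ • ν₁)
    (h₂ : μ.map (foldRect T (1 / 2)) ≤ c₂ • ν₂) (hu₁ : Integrable u ν₁) (hu₂ : Integrable u ν₂) :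
    Integrable (uext T u) μ :=
  (((integrable_comp_of_map_le (measurable_foldRect T 1) h₁ hu₁).const_mul (-3)).add
    ((integrable_comp_of_map_le (measurable_foldRect T (1 / 2)) h₂ hu₂).const_mul 4)).congr
      (.of_forall fun z => (uext_eq_foldRect T u z).symm)

lemma integral_abs_uext_sub_le (h₁ : μ.map (foldRect T 1) ≤ c₁ • ν₁)
    (h₂ : μ.map (foldRect T (1 / 2)) ≤ c₂ • ν₂) {a b : ℝ} (ha : Integrable (fun p => u p - a) ν₁)
    (hb : Integrable (fun p => u p - b) ν₂) :
    ∫ p, |uext T u p - (-3 * a + 4 * b)| ∂μ ≤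
      3 * (c₁ * ∫ p, |u p - a| ∂ν₁) + 4 * (c₂ * ∫ p, |u p - b| ∂ν₂) := by
  have hφ₁ := measurable_foldRect T 1
  have hφ₂ := measurable_foldRect T (1 / 2)
  have hint₁ := (integrable_comp_of_map_le hφ₁ h₁ ha).abs.const_mul 3
  have hint₂ := (integrable_comp_of_map_le hφ₂ h₂ hb).abs.const_mul 4
  calc ∫ p, |uext T u p - (-3 * a + 4 * b)| ∂μ
      ≤ ∫ p, (3 * |u (foldRect T 1 p) - a| + 4 * |u (foldRect T (1 / 2) p) - b|) ∂μ := by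
        refine integral_mono_of_nonneg (.of_forall fun _ => abs_nonneg _) (hint₁.add hint₂)
          (.of_forall fun p => ?_)
        calc |uext T u p - (-3 * a + 4 * b)|
            = |(-3) * (u (foldRect T 1 p) - a) + 4 * (u (foldRect T (1 / 2) p) - b)| := by
              rw [uext_eq_foldRect]
              ring_nf
          _ ≤ |(-3) * (u (foldRect T 1 p) - a)| + |4 * (u (foldRect T (1 / 2) p) - b)| :=
              abs_add_le _ _
          _ = 3 * |u (foldRect T 1 p) - a| + 4 * |u (foldRect T (1 / 2) p) - b| := by
              simp [abs_mul]
    _ = 3 * ∫ p, |u (foldRect T 1 p) - a| ∂μ + 4 * ∫ p, |u (foldRect T (1 / 2) p) - b| ∂μ := by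
        rw [integral_add hint₁ hint₂, integral_const_mul, integral_const_mul]
    _ ≤ 3 * (c₁ * ∫ p, |u p - a| ∂ν₁) + 4 * (c₂ * ∫ p, |u p - b| ∂ν₂) := by
        gcongr
        · exact integral_norm_comp_le_of_map_le hφ₁ h₁ ha
        · exact integral_norm_comp_le_of_map_le hφ₂ h₂ hb

end Measure

lemma measurableSet_OmegaTilde (T : ℝ) : MeasurableSet (OmegaTilde T) :=
  measurableSet_Ioo.prod measurableSet_Ioo

lemma integrable_uextZ (hu : IntegrableOn u (Omega T)) : Integrable (uextZ T u) :=
  (integrable_indicator_iff (measurableSet_OmegaTilde T)).2 <|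
    integrable_uext (map_restrict_OmegaTilde_foldRect_le T one_pos le_rfl)
      (map_restrict_OmegaTilde_foldRect_le T one_half_pos one_half_lt_one.le) hu hu

lemma integral_abs_uextZ_le (hu : IntegrableOn u (Omega T)) :
    ∫ p, |uextZ T u p| ≤ 87 * ∫ p in Omega T, |u p| := by
  have hu₀ : Integrable (fun p => u p - 0) (volume.restrict (Omega T)) := by
    simpa only [sub_zero] using hu.integrable
  calc ∫ p, |uextZ T u p| = ∫ p in OmegaTilde T, |uext T u p| := by
        rw [← integral_indicator (measurableSet_OmegaTilde T)]
        simp only [uextZ, ← Real.norm_eq_abs, norm_indicator_eq_indicator_norm]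
    _ = ∫ p in OmegaTilde T, |uext T u p - (-3 * 0 + 4 * 0)| := by simp
    _ ≤ 87 * ∫ p in Omega T, |u p| := by
        refine (integral_abs_uext_sub_le (map_restrict_OmegaTilde_foldRect_le T one_pos le_rfl)
          (map_restrict_OmegaTilde_foldRect_le T one_half_pos one_half_lt_one.le)
          hu₀ hu₀).trans_eq ?_
        norm_num
        ring

lemma meanOsc_uextZ_pCube2_le (hu : IntegrableOn u (Omega T))
    (hbdd : BddAbove (oscSet2 (Omega T) u)) {z : ℝ × ℝ} {r : ℝ} (hr : 0 < r) (hr₁ : 2 * r ≤ 1)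
    (hrT : 2 * r ^ 2 ≤ T) (hz : pCube2 z r ⊆ OmegaTilde T) :
    meanOsc (volume.restrict (pCube2 z r)) (uextZ T u) ≤ 174 * pBMO2 (Omega T) u := by
  obtain ⟨z₁, hz₁, h₁⟩ := exists_map_restrict_pCube2_foldRect_le one_pos le_rfl hr hr₁ hrT hz
  obtain ⟨z₂, hz₂, h₂⟩ :=
    exists_map_restrict_pCube2_foldRect_le one_half_pos one_half_lt_one.le hr hr₁ hrT hz
  have hfin (w : ℝ × ℝ) := isFiniteMeasure_restrict_pCube2 (z := w) hr
  have hu₁ := hu.mono_set hz₁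
  have hu₂ := hu.mono_set hz₂
  set a := ⨍ p in pCube2 z₁ r, u p with ha
  set b := ⨍ p in pCube2 z₂ r, u p with hb
  have heq : uextZ T u =ᵐ[volume.restrict (pCube2 z r)] uext T u := by
    filter_upwards [ae_restrict_mem (measurableSet_pCube2 z r)] with p hp
    exact Set.indicator_of_mem (hz hp) _
  calc meanOsc (volume.restrict (pCube2 z r)) (uextZ T u)
      = meanOsc (volume.restrict (pCube2 z r)) (uext T u) := meanOsc_congr_ae heq
    _ ≤ 2 * ⨍ p in pCube2 z r, |uext T u p - (-3 * a + 4 * b)| :=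
        meanOsc_le_two_mul_average_norm_sub (integrable_uext h₁ h₂ hu₁ hu₂) _
    _ ≤ 2 * ((4 * r ^ 3)⁻¹ * (27 * (∫ p in pCube2 z₁ r, |u p - a|) +
          60 * ∫ p in pCube2 z₂ r, |u p - b|)) := by
        rw [average_pCube2_eq hr]
        gcongr
        refine (integral_abs_uext_sub_le h₁ h₂ (hu₁.sub (integrable_const a))
          (hu₂.sub (integrable_const b))).trans_eq ?_
        norm_num
        ring
    _ = 54 * meanOsc (volume.restrict (pCube2 z₁ r)) u +
          120 * meanOsc (volume.restrict (pCube2 z₂ r)) u := by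
        simp only [meanOsc, average_pCube2_eq hr, Real.norm_eq_abs, ha, hb]
        ring
    _ ≤ 174 * pBMO2 (Omega T) u := by
        linarith [meanOsc_le_pBMO2 hbdd hr hz₁, meanOsc_le_pBMO2 hbdd hr hz₂]

end ReflectionExtension

section Cutoff

variable {T : ℝ} {Ψ : ℝ × ℝ → ℝ}

lemma isOpen_OmegaTilde (T : ℝ) : IsOpen (OmegaTilde T) :=
  isOpen_Ioo.prod isOpen_Ioo

lemma tsupport_subset_OmegaTilde (hT : 0 < T)
    (hΨ : ∀ p ∉ Set.Ioo (-(3 : ℝ) / 4) (7 / 4) ×ˢ Set.Ioo (-3 * T / 4) (7 * T / 4), Ψ p = 0) :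
    tsupport Ψ ⊆ OmegaTilde T :=
  calc tsupport Ψ
      ⊆ Set.Icc (-(3 : ℝ) / 4) (7 / 4) ×ˢ Set.Icc (-3 * T / 4) (7 * T / 4) :=
        closure_minimal
          ((Function.support_subset_iff'.2 hΨ).trans
            (Set.prod_mono Set.Ioo_subset_Icc_self Set.Ioo_subset_Icc_self))
          (isClosed_Icc.prod isClosed_Icc)
    _ ⊆ OmegaTilde T :=
        Set.prod_mono (Set.Icc_subset_Ioo (by norm_num) (by norm_num))
          (Set.Icc_subset_Ioo (by linarith) (by linarith))

lemma integrableOn_Omega_of_continuousOn {u : ℝ × ℝ → ℝ}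
    (hu : ContinuousOn u (Set.Icc (0 : ℝ) 1 ×ˢ Set.Icc (0 : ℝ) T)) : IntegrableOn u (Omega T) :=
  (hu.integrableOn_compact (isCompact_Icc.prod isCompact_Icc)).mono_set
    (Set.prod_mono Set.Ioo_subset_Icc_self Set.Ioo_subset_Icc_self)

theorem bmo_estimate_of_cutoff_extension_general (hT : 0 < T) {K : ℝ≥0} (hΨlip : LipschitzWith K Ψ)
    (hΨsupp : HasCompactSupport Ψ) (hΨ : tsupport Ψ ⊆ OmegaTilde T) :
    ∃ C : ℝ, 0 < C ∧ ∀ u : ℝ × ℝ → ℝ, IntegrableOn u (Omega T) →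
      BddAbove (oscSet2 (Omega T) u) →
      BddAbove (oscSet2 Set.univ fun p => Ψ p * uextZ T u p) ∧
        pBMO2 Set.univ (fun p => Ψ p * uextZ T u p) ≤
          C * (pBMO2 (Omega T) u + ∫ p in Omega T, |u p|) := by
  obtain ⟨C, hC, hosc⟩ := exists_meanOsc_mul_pCube2_le hΨlip hΨsupp (isOpen_OmegaTilde T) hΨ
    (r₁ := min (1 / 2) T) (by positivity)
  refine ⟨174 * C, by positivity, fun u hu hbdd => ?_⟩
  set B := pBMO2 (Omega T) u
  have hB : 0 ≤ B := pBMO2_nonneg _ _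
  have hI : 0 ≤ ∫ p in Omega T, |u p| := integral_nonneg fun _ => abs_nonneg _
  have hsmall : ∀ z r, 0 < r → r ≤ min (1 / 2) T → pCube2 z r ⊆ OmegaTilde T →
      meanOsc (volume.restrict (pCube2 z r)) (uextZ T u) ≤ 174 * B := fun z r hr hr₁ hz => by
    obtain ⟨hr_half, hrT⟩ := le_min_iff.1 hr₁
    exact meanOsc_uextZ_pCube2_le hu hbdd hr (by linarith) (by nlinarith) hz
  have hbound : ∀ a ∈ oscSet2 Set.univ (fun p => Ψ p * uextZ T u p),
      a ≤ 174 * C * (B + ∫ p in Omega T, |u p|) := by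
    rintro _ ⟨z, r, hr, -, rfl⟩
    calc meanOsc (volume.restrict (pCube2 z r)) (fun p => Ψ p * uextZ T u p)
        ≤ C * (174 * B + ∫ p, |uextZ T u p|) :=
          hosc _ _ (integrable_uextZ hu) (by positivity) hsmall z r hr
      _ ≤ C * (174 * B + 174 * ∫ p in Omega T, |u p|) := by
          gcongr
          linarith [integral_abs_uextZ_le hu]
      _ = 174 * C * (B + ∫ p in Omega T, |u p|) := by ring
  exact ⟨⟨_, hbound⟩, Real.sSup_le hbound (by positivity)⟩

end Cutoff

/-- **Estimate (3.14)**: `‖Ψũ‖_{BMOₚ(ℝ²)} ≤ C (‖u‖_{BMOₚ(Ω_T)} + ‖u‖_{L¹(Ω_T)})`, where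
`Ψ` is a cut-off equal to `1` on `Z₁ = (-1/4,5/4) × (-T/4,5T/4)` and vanishing outside
`Z₂ = (-3/4,7/4) × (-3T/4,7T/4)`, and `ũ` is the reflection extension of `u` extended by
`0` outside `Ω̃_T`. -/
theorem bmo_estimate_of_cutoff_extension (T : ℝ) (hT : 0 < T) (Ψ : ℝ × ℝ → ℝ)
    (hΨsmooth : ContDiff ℝ (⊤ : ℕ∞) Ψ) (hΨsupp : HasCompactSupport Ψ)
    (hΨnonneg : ∀ p, 0 ≤ Ψ p) (hΨle : ∀ p, Ψ p ≤ 1)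
    (hΨone : ∀ p ∈ Set.Ioo (-(1 : ℝ) / 4) (5 / 4) ×ˢ Set.Ioo (-T / 4) (5 * T / 4), Ψ p = 1)
    (hΨzero : ∀ p ∉ Set.Ioo (-(3 : ℝ) / 4) (7 / 4) ×ˢ Set.Ioo (-3 * T / 4) (7 * T / 4),
      Ψ p = 0) :
    ∃ C : ℝ, 0 < C ∧ ∀ u : ℝ × ℝ → ℝ,
      ContinuousOn u (Set.Icc (0 : ℝ) 1 ×ˢ Set.Icc (0 : ℝ) T) →
      BddAbove (oscSet2 (Omega T) u) →
      pBMO2 Set.univ (fun p => Ψ p * uextZ T u p) ≤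
        C * (pBMO2 (Omega T) u + ∫ p in Omega T, |u p|) := by
  obtain ⟨K, hK⟩ := hΨsmooth.lipschitzWith_of_hasCompactSupport hΨsupp (by simp)
  obtain ⟨C, hC, hbound⟩ := bmo_estimate_of_cutoff_extension_general hT hK hΨsupp
    (tsupport_subset_OmegaTilde hT hΨzero)
  exact ⟨C, hC, fun u hu hbdd => (hbound u (integrableOn_Omega_of_continuousOn hu) hbdd).2⟩

end
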